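/- Let 𝒜 be a C*-algebra. Then 𝒜 is commutative if and only if 𝒜_sa, with its canonical order, has the Riesz decomposition property, i.e. [0,x] + [0,y] = [0,x+y] for all x, y ∈ (𝒜_sa)_+. -/

import Mathlib

open scoped Pointwise

/-!
If `A` is commutative and `0 ≤ z ≤ x + y`, then `z = (z - (z - x)⁺) + (z - x)⁺` is a Riesz
decomposition; the bound `w⁺ ≤ y` for commuting `w ≤ y` and `0 ≤ y` is operator monotonicity of the
square root applied to `w² ≤ (2y - w)²`.

Conversely, let `z² = 0` and `h = z + z⋆`, so that `h² = z⋆z + zz⋆` is a sum of orthogonal positive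
elements. Splitting `h a h ≤ ‖a‖ h²` for `0 ≤ a` gives `z⋆z (h a h) zz⋆ = 0`, hence `w a w = 0` for
`w = z⋆zz⋆` and every `a`, and so `z = 0`. Thus `A`, and with it its unitization, is reduced.

In a reduced unital C⋆-algebra, `p b n = 0` for all `b` when `p` and `n` are the positive and
negative parts of a self-adjoint `h`, so `[p, a]` and `[n, a]` are orthogonal and
`‖[h, a]‖ ≤ max ‖[p, a]‖ ‖[n, a]‖`. Subtracting `‖h‖ / 2` from `p` and `n` changes neither
commutator and leaves elements of norm at most `‖h‖ / 2`, so iterating gives `[h, a] = 0`.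
-/

section OrderedGroup

/-- The Riesz decomposition property `[0, x] + [0, y] = [0, x + y]` for `0 ≤ x` and `0 ≤ y`, where
the sum on the left is the pointwise sum of sets. -/
def HasRieszDecomposition (G : Type*) [AddZeroClass G] [Preorder G] : Prop :=
  ∀ x y : G, 0 ≤ x → 0 ≤ y → Set.Icc 0 x + Set.Icc 0 y = Set.Icc 0 (x + y)

lemma hasRieszDecomposition_iff {G : Type*} [AddCommMonoid G] [PartialOrder G]
    [IsOrderedAddMonoid G] :
    HasRieszDecomposition G ↔ ∀ x y z : G, 0 ≤ x → 0 ≤ y → 0 ≤ z → z ≤ x + y →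
      ∃ u ∈ Set.Icc 0 x, ∃ v ∈ Set.Icc 0 y, u + v = z := by
  refine ⟨fun H x y z hx hy hz hzxy ↦ Set.mem_add.1 ?_, fun H x y hx hy ↦ ?_⟩
  · exact (H x y hx hy).symm ▸ ⟨hz, hzxy⟩
  · refine Set.Subset.antisymm ?_ fun z hz ↦ Set.mem_add.2 (H x y z hx hy hz.1 hz.2)
    rintro _ ⟨u, hu, v, hv, rfl⟩
    exact ⟨add_nonneg hu.1 hv.1, add_le_add hu.2 hv.2⟩

end OrderedGroup

section Commuting

variable {A : Type*} [NonUnitalCStarAlgebra A] [PartialOrder A] [StarOrderedRing A]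

lemma posPart_le_of_le_of_commute {w y : A} (hy : 0 ≤ y) (hwy : w ≤ y) (hcomm : Commute w y) :
    w⁺ ≤ y := by
  have hw : IsSelfAdjoint w := by
    simpa using (IsSelfAdjoint.of_nonneg hy).sub (.of_nonneg (sub_nonneg.2 hwy))
  have hprod : 0 ≤ (y - w) * y :=
    ((Commute.refl y).sub_left hcomm).mul_nonneg (sub_nonneg.2 hwy) hy
  have hsq : star w * w ≤ (y - w + y) * (y - w + y) := by
    have hdiff : (y - w + y) * (y - w + y) - star w * w = 4 • ((y - w) * y) := by
      simp only [hw.star_eq, mul_add, add_mul, mul_sub, sub_mul, ← hcomm.eq]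
      abel
    exact sub_nonneg.1 (hdiff ▸ nsmul_nonneg hprod 4)
  have habs : CFC.abs w ≤ y - w + y :=
    (CFC.sqrt_le_sqrt _ _ hsq).trans_eq
      (CFC.sqrt_mul_self _ (add_nonneg (sub_nonneg.2 hwy) hy))
  have htwo : (2 : ℝ) • w⁺ ≤ (2 : ℝ) • y := by
    calc (2 : ℝ) • w⁺ = CFC.abs w + w := by rw [CFC.abs_add_self w hw, ofNat_smul_eq_nsmul]
      _ ≤ y - w + y + w := add_le_add_left habs w
      _ = (2 : ℝ) • y := by rw [two_smul]; abel
  exact le_of_smul_le_smul_left htwo two_pos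

lemma exists_add_eq_of_le_add_of_commute {x y z : A} (hx : 0 ≤ x) (hy : 0 ≤ y) (hz : 0 ≤ z)
    (hzxy : z ≤ x + y) (hxy : Commute x y) (hzx : Commute z x) (hzy : Commute z y) :
    ∃ u ∈ Set.Icc 0 x, ∃ v ∈ Set.Icc 0 y, u + v = z := by
  have hsa : IsSelfAdjoint (z - x) := (IsSelfAdjoint.of_nonneg hz).sub (.of_nonneg hx)
  have hle_y : (z - x)⁺ ≤ y :=
    posPart_le_of_le_of_commute hy (sub_le_iff_le_add'.2 hzxy) (hzy.sub_left hxy)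
  have hle_z : (z - x)⁺ ≤ z :=
    posPart_le_of_le_of_commute hz (sub_le_self z hx) ((Commute.refl z).sub_left hzx.symm)
  exact ⟨z - (z - x)⁺, ⟨sub_nonneg.2 hle_z, sub_le_comm.1 (CFC.le_posPart hsa)⟩,
    (z - x)⁺, ⟨CFC.posPart_nonneg _, hle_y⟩, sub_add_cancel _ _⟩

lemma hasRieszDecomposition_selfAdjoint_of_mul_comm (hA : ∀ a b : A, a * b = b * a) :
    HasRieszDecomposition (selfAdjoint A) := by
  refine hasRieszDecomposition_iff.2 fun x y z hx hy hz hzxy ↦ ?_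
  obtain ⟨u, hu, v, hv, huv⟩ :=
    exists_add_eq_of_le_add_of_commute hx hy hz hzxy (hA x y) (hA z x) (hA z y)
  exact ⟨⟨u, .of_nonneg hu.1⟩, hu, ⟨v, .of_nonneg hv.1⟩, hv, Subtype.ext huv⟩

end Commuting

section SquareZero

variable {A : Type*} [NonUnitalCStarAlgebra A] [PartialOrder A] [StarOrderedRing A]

lemma mul_eq_zero_of_le_of_mul_eq_zero {u x y : A} (hu : 0 ≤ u) (hux : u ≤ x) (hxy : x * y = 0) :
    u * y = 0 := by
  have hconj : star y * u * y = 0 := by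
    refine le_antisymm ?_ (star_left_conjugate_nonneg hu y)
    simpa only [mul_assoc, hxy, mul_zero] using star_left_conjugate_le_conjugate hux y
  have hsqrt : CFC.sqrt u * y = 0 := by
    rw [← CStarRing.star_mul_self_eq_zero_iff, star_mul, (CFC.sqrt_nonneg u).star_eq, mul_assoc,
      ← mul_assoc (CFC.sqrt u), CFC.sqrt_mul_sqrt_self u, ← mul_assoc, hconj]
  rw [← CFC.sqrt_mul_sqrt_self u, mul_assoc, hsqrt, mul_zero]

lemma mul_mul_eq_zero_of_le_add (H : HasRieszDecomposition (selfAdjoint A)) {x y c : A}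
    (hx : 0 ≤ x) (hy : 0 ≤ y) (hxy : x * y = 0) (hc : 0 ≤ c) (hcxy : c ≤ x + y) :
    x * c * y = 0 := by
  obtain ⟨u, hu, v, hv, huv⟩ := hasRieszDecomposition_iff.1 H ⟨x, .of_nonneg hx⟩
    ⟨y, .of_nonneg hy⟩ ⟨c, .of_nonneg hc⟩ hx hy hc hcxy
  have huy : (u : A) * y = 0 := mul_eq_zero_of_le_of_mul_eq_zero hu.1 hu.2 hxy
  have hyx : y * x = 0 := by
    simpa only [star_mul, hx.star_eq, hy.star_eq, star_zero] using congrArg star hxy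
  have hvx : (v : A) * x = 0 := mul_eq_zero_of_le_of_mul_eq_zero hv.1 hv.2 hyx
  have hxv : x * v = 0 := by
    simpa only [star_mul, hx.star_eq, v.2.star_eq, star_zero] using congrArg star hvx
  have hcuv : (u : A) + v = c := congrArg Subtype.val huv
  rw [← hcuv, mul_add, add_mul, mul_assoc, huy, hxv, mul_zero, zero_mul, add_zero]

lemma mul_mul_eq_zero_of_mul_self_eq_zero (H : HasRieszDecomposition (selfAdjoint A)) {z a : A}
    (hz : z * z = 0) (ha : 0 ≤ a) (ha_norm : ‖a‖ ≤ 1) :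
    (star z * z * star z) * a * (star z * z * star z) = 0 := by
  have hzs : star z * star z = 0 := by rw [← star_mul, hz, star_zero]
  set h := z + star z with hdef
  have hh : IsSelfAdjoint h := .add_star_self z
  have hsq : h * h = star z * z + z * star z := by
    rw [hdef, add_mul, mul_add, mul_add, hz, hzs, zero_add, add_zero, add_comm]
  have horth : star z * z * (z * star z) = 0 := by
    rw [mul_assoc, ← mul_assoc z, hz, zero_mul, mul_zero]
  have hle : h * a * h ≤ star z * z + z * star z := by
    calc h * a * h ≤ ‖a‖ • (h * h) := by
          simpa only [hh.star_eq] using CStarAlgebra.star_left_conjugate_le_norm_smul (a := h)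
            (IsSelfAdjoint.of_nonneg ha)
      _ ≤ (1 : ℝ) • (h * h) := smul_le_smul_of_nonneg_right ha_norm hh.mul_self_nonneg
      _ = star z * z + z * star z := by rw [one_smul, hsq]
  have hleft : star z * z * h = star z * z * star z := by
    rw [hdef, mul_add, mul_assoc, hz, mul_zero, zero_add]
  have hright : h * (z * star z) = star z * z * star z := by
    rw [hdef, add_mul, ← mul_assoc, hz, zero_mul, zero_add, mul_assoc]
  calc (star z * z * star z) * a * (star z * z * star z)
      = star z * z * h * a * (h * (z * star z)) := by rw [hleft, hright]
    _ = star z * z * (h * a * h) * (z * star z) := by simp only [mul_assoc]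
    _ = 0 := mul_mul_eq_zero_of_le_add H (star_mul_self_nonneg z) (mul_star_self_nonneg z) horth
        (hh.conjugate_nonneg ha) hle

lemma eq_zero_of_mul_star_mul_self_eq_zero {R : Type*} [NonUnitalNormedRing R] [StarRing R]
    [CStarRing R] {x : R} (hx : x * star x * x = 0) : x = 0 := by
  rw [← CStarRing.star_mul_self_eq_zero_iff, ← CStarRing.star_mul_self_eq_zero_iff, star_mul,
    star_star, mul_assoc, ← mul_assoc x, hx, mul_zero]

lemma HasRieszDecomposition.eq_zero_of_mul_self_eq_zero
    (H : HasRieszDecomposition (selfAdjoint A)) {z : A} (hz : z * z = 0) : z = 0 := by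
  have hmap : LinearMap.mulLeftRight ℂ (star z * z * star z, star z * z * star z) = 0 :=
    LinearMap.ext_on CStarAlgebra.span_nonneg_inter_unitClosedBall fun a ha ↦
      mul_mul_eq_zero_of_mul_self_eq_zero H hz ha.1 (mem_closedBall_zero_iff.1 ha.2)
  have hw : star z * z * star z = 0 :=
    eq_zero_of_mul_star_mul_self_eq_zero (LinearMap.congr_fun hmap _)
  refine star_eq_zero.1 (eq_zero_of_mul_star_mul_self_eq_zero ?_)
  rw [star_star, hw]

end SquareZero

section Reduced

lemma mul_mul_eq_zero_of_mul_eq_zero {M : Type*} [MonoidWithZero M] [IsReduced M] {a b : M}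
    (hab : a * b = 0) (c : M) : a * c * b = 0 := by
  have hsq {x : M} (hx : x * x = 0) : x = 0 := (pow_eq_zero_iff two_ne_zero).1 (by rwa [sq])
  have hba : b * a = 0 := hsq (by rw [mul_assoc, ← mul_assoc a, hab, zero_mul, mul_zero])
  refine hsq ?_
  rw [mul_assoc, ← mul_assoc b, ← mul_assoc b, hba, zero_mul, zero_mul, mul_zero]

lemma lie_mul_lie_eq_zero {R : Type*} [Ring R] {p n : R} (hpn : ∀ c, p * c * n = 0) (a b : R) :
    ⁅p, a⁆ * ⁅n, b⁆ = 0 := by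
  calc ⁅p, a⁆ * ⁅n, b⁆
      = p * a * n * b - p * (a * b) * n - a * (p * 1 * n) * b + a * (p * b * n) := by
        simp only [Ring.lie_def]; noncomm_ring
    _ = 0 := by simp only [hpn, zero_mul, mul_zero, sub_zero, add_zero]

lemma star_lie_eq_neg_lie {R : Type*} [NonUnitalRing R] [StarRing R] {p : R}
    (hp : IsSelfAdjoint p) (a : R) : star ⁅p, a⁆ = -⁅p, star a⁆ := by
  rw [Ring.lie_def, Ring.lie_def, star_sub, star_mul, star_mul, hp.star_eq, neg_sub]

lemma isReduced_unitization {R A : Type*} [CommSemiring R] [IsReduced R] [NonUnitalSemiring A]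
    [Module R A] [IsScalarTower R A A] [SMulCommClass R A A] (hA : ∀ a : A, a * a = 0 → a = 0) :
    IsReduced (Unitization R A) := by
  refine (isReduced_iff_pow_one_lt 2 one_lt_two).2 fun x hx ↦ ?_
  rw [sq] at hx
  have hfst : x.fst = 0 := (pow_eq_zero_iff two_ne_zero).1 <| by
    rw [sq, ← Unitization.fst_mul, hx, Unitization.fst_zero]
  have hsnd : x.snd = 0 := hA _ <| by
    simpa [hfst] using congrArg (·.snd) hx
  exact Unitization.ext hfst hsnd

lemma norm_sub_le_max_of_orthogonal {A : Type*} [NonUnitalCStarAlgebra A] {x y : A}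
    (hxy : star x * y = 0) (hxy' : x * star y = 0) : ‖x - y‖ ≤ max ‖x‖ ‖y‖ := by
  have hyx : star y * x = 0 := by simpa using congrArg star hxy
  have hmul : star x * x * (star y * y) = 0 := by
    rw [mul_assoc, ← mul_assoc x, hxy', zero_mul, mul_zero]
  have hexpand : star (x - y) * (x - y) = star x * x + star y * y := by
    rw [star_sub, sub_mul, mul_sub, mul_sub, hxy, hyx]
    abel
  have hsq : ‖x - y‖ * ‖x - y‖ = max (‖x‖ * ‖x‖) (‖y‖ * ‖y‖) := by
    rw [← CStarRing.norm_star_mul_self, hexpand,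
      (IsSelfAdjoint.star_mul_self x).norm_add_eq_max (.star_mul_self y) hmul,
      CStarRing.norm_star_mul_self, CStarRing.norm_star_mul_self]
  refine (mul_self_le_mul_self_iff (norm_nonneg _) (le_max_of_le_left (norm_nonneg x))).2
    (hsq.trans_le ?_)
  exact max_le (mul_self_le_mul_self (norm_nonneg x) (le_max_left _ _))
    (mul_self_le_mul_self (norm_nonneg y) (le_max_right _ _))

variable {U : Type*} [CStarAlgebra U]

lemma norm_lie_le_max_of_isReduced [IsReduced U] {h : U} (hh : IsSelfAdjoint h) (a : U) :
    ‖⁅h, a⁆‖ ≤ max ‖⁅h⁺, a⁆‖ ‖⁅h⁻, a⁆‖ := by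
  have hp : IsSelfAdjoint h⁺ := cfcₙ_predicate _ h
  have hn : IsSelfAdjoint h⁻ := cfcₙ_predicate _ h
  have horth (b c : U) : ⁅h⁺, b⁆ * ⁅h⁻, c⁆ = 0 :=
    lie_mul_lie_eq_zero (mul_mul_eq_zero_of_mul_eq_zero (CFC.posPart_mul_negPart h)) b c
  have hlie : ⁅h, a⁆ = ⁅h⁺, a⁆ - ⁅h⁻, a⁆ := by
    conv_lhs => rw [← CFC.posPart_sub_negPart h hh, Ring.lie_def, sub_mul, mul_sub]
    exact sub_sub_sub_comm _ _ _ _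
  rw [hlie]
  apply norm_sub_le_max_of_orthogonal
  · rw [star_lie_eq_neg_lie hp, neg_mul, horth, neg_zero]
  · rw [star_lie_eq_neg_lie hn, mul_neg, horth, neg_zero]

lemma norm_posPart_sub_algebraMap_le {h : U} (hh : IsSelfAdjoint h) :
    ‖h⁺ - algebraMap ℝ U (‖h‖ / 2)‖ ≤ ‖h‖ / 2 := by
  have hcfc : h⁺ - algebraMap ℝ U (‖h‖ / 2) = cfc (fun t : ℝ ↦ t⁺ - ‖h‖ / 2) h := by
    rw [CFC.posPart_def, cfcₙ_eq_cfc, cfc_sub .., cfc_const ..]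
  rw [hcfc]
  refine norm_cfc_le (by positivity) fun t ht ↦ ?_
  have ht' : |t| ≤ ‖h‖ := by
    simpa only [cfc_id ℝ h, id_eq, Real.norm_eq_abs] using norm_apply_le_norm_cfc id h ht
  have htpos : t⁺ ≤ |t| := sup_le (le_abs_self t) (abs_nonneg t)
  rw [Real.norm_eq_abs, abs_le]
  constructor
  · linarith [posPart_nonneg t]
  · linarith

lemma norm_lie_posPart_le {a : U} {C : ℝ} (hC₀ : 0 ≤ C)
    (hC : ∀ k : U, IsSelfAdjoint k → ‖⁅k, a⁆‖ ≤ C * ‖k‖) {h : U} (hh : IsSelfAdjoint h) :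
    ‖⁅h⁺, a⁆‖ ≤ C / 2 * ‖h‖ := by
  have hsa : IsSelfAdjoint (h⁺ - algebraMap ℝ U (‖h‖ / 2)) :=
    IsSelfAdjoint.sub (cfcₙ_predicate _ h) (.algebraMap U (.all _))
  calc ‖⁅h⁺, a⁆‖ = ‖⁅h⁺ - algebraMap ℝ U (‖h‖ / 2), a⁆‖ := by
        rw [Ring.lie_def, Ring.lie_def, sub_mul, mul_sub, Algebra.commutes,
          sub_sub_sub_cancel_right]
    _ ≤ C * ‖h⁺ - algebraMap ℝ U (‖h‖ / 2)‖ := hC _ hsa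
    _ ≤ C * (‖h‖ / 2) := by gcongr; exact norm_posPart_sub_algebraMap_le hh
    _ = C / 2 * ‖h‖ := by ring

lemma norm_lie_le_of_isReduced [IsReduced U] (a : U) (n : ℕ) {h : U} (hh : IsSelfAdjoint h) :
    ‖⁅h, a⁆‖ ≤ 2 * ‖a‖ / 2 ^ n * ‖h‖ := by
  induction n generalizing h with
  | zero =>
    calc ‖⁅h, a⁆‖ ≤ ‖h * a‖ + ‖a * h‖ := norm_sub_le _ _
      _ ≤ ‖h‖ * ‖a‖ + ‖a‖ * ‖h‖ := add_le_add (norm_mul_le h a) (norm_mul_le a h)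
      _ = 2 * ‖a‖ / 2 ^ 0 * ‖h‖ := by ring
  | succ n ih =>
    have hpos {k : U} (hk : IsSelfAdjoint k) : ‖⁅k⁺, a⁆‖ ≤ 2 * ‖a‖ / 2 ^ (n + 1) * ‖k‖ := by
      rw [pow_succ, ← div_div]
      exact norm_lie_posPart_le (by positivity) (fun _ ↦ ih) hk
    refine (norm_lie_le_max_of_isReduced hh a).trans (max_le (hpos hh) ?_)
    simpa only [CFC.posPart_neg, norm_neg] using hpos hh.neg

lemma commute_of_isReduced [IsReduced U] (a b : U) : Commute a b := by
  have hsa {h : U} (hh : IsSelfAdjoint h) : Commute h b := by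
    have hlim : Filter.Tendsto (fun n : ℕ ↦ 2 * ‖b‖ / 2 ^ n * ‖h‖) Filter.atTop (nhds 0) := by
      simpa only [zero_mul] using (tendsto_const_nhds.div_atTop
        (tendsto_pow_atTop_atTop_of_one_lt one_lt_two)).mul_const ‖h‖
    have hlie : ‖⁅h, b⁆‖ ≤ 0 := ge_of_tendsto' hlim fun n ↦ norm_lie_le_of_isReduced b n hh
    exact commute_iff_lie_eq.2 (norm_le_zero_iff.1 hlie)
  rw [← realPart_add_I_smul_imaginaryPart a]
  exact (hsa (realPart a).2).add_left ((hsa (imaginaryPart a).2).smul_left Complex.I)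

lemma mul_comm_of_forall_mul_self_eq_zero {A : Type*} [NonUnitalCStarAlgebra A]
    (hA : ∀ z : A, z * z = 0 → z = 0) (a b : A) : a * b = b * a := by
  have := isReduced_unitization (R := ℂ) hA
  apply Unitization.inr_injective (R := ℂ)
  simpa only [Unitization.inr_mul] using
    (commute_of_isReduced (a : Unitization ℂ A) (b : Unitization ℂ A)).eq

end Reduced

/-- A C*-algebra `A` is commutative if and only if its self-adjoint part, endowed with its
canonical order, has the Riesz decomposition property:
`[0,x] + [0,y] = [0,x+y]` for all positive self-adjoint `x, y`. -/
theorem commutative_iff_rieszDecomposition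
    {A : Type*} [NonUnitalCStarAlgebra A] [PartialOrder A] [StarOrderedRing A] :
    (∀ a b : A, a * b = b * a) ↔
      (∀ x y : selfAdjoint A, 0 ≤ x → 0 ≤ y →
        Set.Icc (0 : selfAdjoint A) x + Set.Icc (0 : selfAdjoint A) y =
          Set.Icc (0 : selfAdjoint A) (x + y)) :=
  ⟨hasRieszDecomposition_selfAdjoint_of_mul_comm,
    fun H ↦ mul_comm_of_forall_mul_self_eq_zero fun _ ↦
      HasRieszDecomposition.eq_zero_of_mul_self_eq_zero H⟩
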